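/- Let t ≥ 1 and n ≥ 0 be integers and let q ∈ ℂ with 0 < |q| < 1. Define α''_0 = 1 and, for j ≥ 1, α''_j = (-1)^j ( q^{j(j+2t-3)/2} + q^{j(j-2t+3)/2} ) (all exponents are integers). Then the pair (α''_j, β''_n) is a Bailey pair relative to 1: Σ_{n ≥ n_{2t-1} ≥ n_{2t-2} ≥ … ≥ n_1 ≥ 0} (-1)^{n_t} q^{Σ_{i=1}^{t-1} n_{t+i}^2 + n_t(n_t-1)/2 - Σ_{i=1}^{t-1} n_i n_{i+1} - Σ_{i=1}^{t-2} n_i} / ( (q;q)_{n - n_{2t-1}} (q;q)_{n_{2t-1} - n_{2t-2}} ⋯ (q;q)_{n_2 - n_1} (q;q)_{n_1} ) = Σ_{j=0}^{n} α''_j / ( (q;q)_{n-j} (q;q)_{n+j} ), where the left-hand sum is over all weakly decreasing (2t-1)-tuples of nonnegative integers bounded above by n. -/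

import Mathlib

open Finset

/-- The finite q-Pochhammer symbol `(a;q)_n`. -/
noncomputable def qPoch (q a : ℂ) (n : ℕ) : ℂ := ∏ j ∈ Finset.range n, (1 - a * q ^ j)

/-- The summand of the left-hand multisum, for a weakly decreasing tuple
`n ≥ n_{2T-1} ≥ … ≥ n_1 ≥ 0` (the paper's `t` is `t+1`, the tuple has length
`2t+1`, and `A j = n_{j+1}` 0-based). -/
noncomputable def bTerm (q : ℂ) (t n : ℕ) (A : ℕ → ℕ) : ℂ :=
  (-1 : ℂ) ^ (A t) *
  q ^ ((∑ i ∈ Finset.range t, (A (t + 1 + i) : ℤ) ^ 2)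
      + (A t : ℤ) * ((A t : ℤ) - 1) / 2
      - (∑ i ∈ Finset.range t, (A i : ℤ) * (A (i + 1) : ℤ))
      - (∑ i ∈ Finset.range (t - 1), (A i : ℤ))) /
  (qPoch q q (n - A (2 * t)) *
    (∏ i ∈ Finset.range (2 * t), qPoch q q (A (i + 1) - A i)) *
    qPoch q q (A 0))

/-- `α''_j`: `α''_0 = 1`, and `α''_j = (-1)^j (q^{j(j+2T-3)/2} + q^{j(j-2T+3)/2})` for
`j ≥ 1`, with `T = t+1` the paper's `t` (so `2T-3 = 2t-1`); both exponents are
integers. -/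
noncomputable def alphaPP (q : ℂ) (t : ℕ) (j : ℕ) : ℂ :=
  if j = 0 then 1
  else (-1 : ℂ) ^ j *
    (q ^ ((j : ℤ) * ((j : ℤ) + 2 * (t : ℤ) - 1) / 2) +
     q ^ ((j : ℤ) * ((j : ℤ) - 2 * (t : ℤ) + 1) / 2))

noncomputable def ee (x : ℂ) (n : ℕ) : ℂ := (qPoch x x n)⁻¹

lemma ee_zero (x : ℂ) : ee x 0 = 1 := by simp [ee, qPoch]

lemma ee_succ {x : ℂ} (hx : ∀ n : ℕ, 1 - x ^ (n + 1) ≠ 0) (n : ℕ) :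
    ee x n = (1 - x ^ (n + 1)) * ee x (n + 1) := by
  have h := hx n
  unfold ee qPoch
  rw [Finset.prod_range_succ, mul_inv, ← pow_succ' x n]
  field_simp

lemma vand {x : ℂ} (hx : ∀ n : ℕ, 1 - x ^ (n + 1) ≠ 0) (m : ℕ) : ∀ c : ℕ,
    ∑ k ∈ range (m + 1), x ^ (k ^ 2 + c * k) * ee x (m - k) * ee x k * ee x (k + c)
      = ee x m * ee x (m + c) := by
  induction m with
  | zero => intro c; simp [ee_zero]
  | succ m ih =>
    intro c
    apply mul_left_cancel₀ (hx m)
    have h1 : ∀ k ∈ range (m + 1 + 1),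
        (1 - x ^ (m + 1)) * (x ^ (k ^ 2 + c * k) * ee x (m + 1 - k) * ee x k * ee x (k + c))
        = x ^ (k ^ 2 + c * k) * ((1 - x ^ (m + 1 - k)) * ee x (m + 1 - k)) * ee x k * ee x (k + c)
        + x ^ (k ^ 2 + c * k) * x ^ (m + 1 - k) * ee x (m + 1 - k) * ((1 - x ^ k) * ee x k)
            * ee x (k + c) := by
      intro k hk
      have hk' : k ≤ m + 1 := by simp at hk; omega
      have : x ^ (m + 1) = x ^ (m + 1 - k) * x ^ k := by rw [← pow_add]; congr 1; omega
      rw [this]; ring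
    rw [mul_sum, sum_congr rfl h1, sum_add_distrib, sum_range_succ, sum_range_succ' _ (m + 1)]
    have h2 : ∑ k ∈ range (m + 1), x ^ (k ^ 2 + c * k) * ((1 - x ^ (m + 1 - k)) * ee x (m + 1 - k))
        * ee x k * ee x (k + c) = ee x m * ee x (m + c) := by
      rw [← ih c]
      refine sum_congr rfl fun k hk => ?_
      have hk' : k ≤ m := by simp at hk; omega
      have e1 : m + 1 - k = (m - k) + 1 := by omega
      rw [e1, ← ee_succ hx]
    have h3 : ∑ k ∈ range (m + 1), x ^ ((k + 1) ^ 2 + c * (k + 1)) * x ^ (m + 1 - (k + 1))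
        * ee x (m + 1 - (k + 1)) * ((1 - x ^ (k + 1)) * ee x (k + 1)) * ee x (k + 1 + c)
        = x ^ (m + c + 1) * (ee x m * ee x (m + (c + 1))) := by
      rw [← ih (c + 1), mul_sum]
      refine sum_congr rfl fun k hk => ?_
      have hk' : k ≤ m := by simp at hk; omega
      have e1 : m + 1 - (k + 1) = m - k := by omega
      rw [e1, ← ee_succ hx, ← pow_add]
      have e2 : (k + 1) ^ 2 + c * (k + 1) + (m - k) = (m + c + 1) + (k ^ 2 + (c + 1) * k) := by
        zify [hk']; ring
      rw [e2, pow_add, show k + 1 + c = k + (c + 1) by ring]; ring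
    rw [h2, h3]
    have h4 := ee_succ hx (m + c)
    have h5 := ee_succ hx m
    rw [h4, h5, show m + (c + 1) = m + c + 1 by ring, show m + 1 + c = m + c + 1 by ring]
    simp
    ring

lemma bailey {x : ℂ} (hx : ∀ n : ℕ, 1 - x ^ (n + 1) ≠ 0) (s : ℕ) (α : ℕ → ℂ) (n : ℕ) :
    ∑ r ∈ range (n + 1), x ^ (r ^ 2 + s * r) * ee x (n - r) *
        (∑ j ∈ range (r + 1), α j * ee x (r - j) * ee x (r + j + s))
      = ∑ j ∈ range (n + 1), x ^ (j ^ 2 + s * j) * α j * ee x (n - j) * ee x (n + j + s) := by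
  simp_rw [mul_sum]
  rw [Finset.sum_comm' (t' := range (n + 1)) (s' := fun j => Ico j (n + 1))
    (by intro a b; simp; omega)]
  refine sum_congr rfl fun j hj => ?_
  have hj' : j ≤ n := by simp at hj; omega
  rw [sum_Ico_eq_sum_range]
  have := vand hx (n - j) (2 * j + s)
  rw [show n + j + s = n - j + (2 * j + s) by omega, mul_assoc, ← this, mul_sum,
    show n + 1 - j = n - j + 1 by omega]
  refine sum_congr rfl fun k hk => ?_
  rw [show n - (j + k) = n - j - k by omega, show j + k - j = k by omega,
    show j + k + j + s = k + (2 * j + s) by ring,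
    show (j + k) ^ 2 + s * (j + k) = (j ^ 2 + s * j) + (k ^ 2 + (2 * j + s) * k) by ring, pow_add]
  ring

lemma ch2 (n : ℕ) : (n + 1).choose 2 = n.choose 2 + n := by
  rw [Nat.choose_succ_succ' n 1]; simp; omega

lemma delta {x : ℂ} (hx : ∀ n : ℕ, 1 - x ^ (n + 1) ≠ 0) (n : ℕ) :
    ∑ r ∈ range (n + 1), (-1) ^ r * x ^ (r.choose 2) * ee x (n - r) * ee x r
      = if n = 0 then 1 else 0 := by
  cases n with
  | zero => simp [ee_zero]
  | succ n =>
    have key : ∀ R ≤ n + 1, (1 - x ^ (n + 1)) * ∑ r ∈ range (R + 1),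
        (-1) ^ r * x ^ (r.choose 2) * ee x (n + 1 - r) * ee x r
        = (-1) ^ R * x ^ ((R + 1).choose 2) * (1 - x ^ (n + 1 - R)) * ee x (n + 1 - R) * ee x R := by
      intro R
      induction R with
      | zero => intro _; simp [ee_zero]
      | succ R ih =>
        intro hR
        rw [sum_range_succ, mul_add, ih (by omega)]
        obtain ⟨d, rfl⟩ : ∃ d, n = R + d := ⟨n - R, by omega⟩
        rw [show R + d + 1 - R = d + 1 by omega, show R + d + 1 - (R + 1) = d by omega,
          ee_succ hx R, ee_succ hx d, ch2 (R + 1), ch2 R]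
        ring
    have h := key (n + 1) le_rfl
    simp only [Nat.sub_self, pow_zero, sub_self, mul_zero, zero_mul, mul_eq_zero, hx n,
      false_or] at h
    simpa using h

lemma unitp {x : ℂ} (hx : ∀ n : ℕ, 1 - x ^ (n + 1) ≠ 0) (n : ℕ) :
    ∑ j ∈ range (n + 1), ((-1) ^ j * x ^ (j.choose 2) * (1 - x ^ (2 * j + 1))) * ee x (n - j)
        * ee x (n + j + 1)
      = if n = 0 then 1 else 0 := by
  cases n with
  | zero => simp [ee_zero]; have := ee_succ hx 0; simpa [ee_zero] using this.symm
  | succ n =>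
    have key : ∀ R ≤ n + 1, (1 - x ^ (n + 1)) * ∑ j ∈ range (R + 1),
        ((-1) ^ j * x ^ (j.choose 2) * (1 - x ^ (2 * j + 1))) * ee x (n + 1 - j)
        * ee x (n + 1 + j + 1)
        = (-1) ^ R * x ^ ((R + 1).choose 2) * (1 - x ^ (R + 1)) * (1 - x ^ (n + 1 - R)) *
          ee x (n + 1 - R) * ee x (n + 1 + R + 1) := by
      intro R
      induction R with
      | zero => intro _; simp; ring_nf
      | succ R ih =>
        intro hR
        rw [sum_range_succ, mul_add, ih (by omega)]
        obtain ⟨d, rfl⟩ : ∃ d, n = R + d := ⟨n - R, by omega⟩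
        rw [show R + d + 1 - R = d + 1 by omega, show R + d + 1 - (R + 1) = d by omega,
          ee_succ hx (R + d + 1 + R + 1), ee_succ hx d, ch2 (R + 1), ch2 R]
        ring
    have h := key (n + 1) le_rfl
    simp only [Nat.sub_self, pow_zero, sub_self, mul_zero, zero_mul, mul_eq_zero, hx n,
      false_or] at h
    simpa using h

noncomputable def bb (x : ℂ) (i n : ℕ) : ℂ :=
  ∑ j ∈ range (n + 1), ((-1) ^ j * x ^ (i * (j ^ 2 + j) + j.choose 2) * (1 - x ^ (2 * j + 1)))
    * ee x (n - j) * ee x (n + j + 1)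

lemma bb_zero {x : ℂ} (hx : ∀ n : ℕ, 1 - x ^ (n + 1) ≠ 0) (n : ℕ) :
    bb x 0 n = if n = 0 then 1 else 0 := by
  rw [← unitp hx n]; simp [bb]

lemma bb_succ {x : ℂ} (hx : ∀ n : ℕ, 1 - x ^ (n + 1) ≠ 0) (i n : ℕ) :
    bb x (i + 1) n = ∑ r ∈ range (n + 1), x ^ (r ^ 2 + r) * ee x (n - r) * bb x i r := by
  have := bailey hx 1 (fun j => (-1) ^ j * x ^ (i * (j ^ 2 + j) + j.choose 2) *
    (1 - x ^ (2 * j + 1))) n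
  simp only [one_mul] at this
  unfold bb
  rw [this]
  refine sum_congr rfl fun j hj => ?_
  rw [show (i + 1) * (j ^ 2 + j) + j.choose 2 = (j ^ 2 + j) + (i * (j ^ 2 + j) + j.choose 2) by ring,
    pow_add x (j ^ 2 + j)]
  ring

lemma bb_one {x : ℂ} (hx : ∀ n : ℕ, 1 - x ^ (n + 1) ≠ 0) (n : ℕ) : bb x 1 n = ee x n := by
  rw [bb_succ hx]
  simp [bb_zero hx]

def Fch (K : ℕ → ℕ → ℕ → ℂ) (f : ℕ → ℂ) : ℕ → ℕ → ℂ
  | 0, n => f n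
  | m + 1, n => ∑ r ∈ range (n + 1), K m n r * Fch K f m r

def tex (m B : ℕ) (a : Fin m → Fin (B + 1)) (n : ℕ) (j : ℕ) : ℕ :=
  if h : j < m then (a ⟨j, h⟩ : ℕ) else n

lemma tex_snoc (m B : ℕ) (a : Fin m → Fin (B + 1)) (r : Fin (B + 1)) (n j : ℕ) (hj : j ≤ m) :
    tex (m + 1) B (Fin.snoc a r) n j = tex m B a r j := by
  unfold tex
  rw [dif_pos (by omega)]
  split_ifs with h
  · simp [Fin.snoc, h]
  · simp [Fin.snoc, h]

lemma chain (K : ℕ → ℕ → ℕ → ℂ) (f : ℕ → ℂ) (B m : ℕ) : ∀ n ≤ B,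
    ∑ a : Fin m → Fin (B + 1), (∏ i ∈ range m,
      if tex m B a n i ≤ tex m B a n (i + 1) then K i (tex m B a n (i + 1)) (tex m B a n i) else 0)
      * f (tex m B a n 0) = Fch K f m n := by
  induction m with
  | zero => intro n hn; simp [Fch, tex]
  | succ m ih =>
    intro n hn
    rw [← (Fin.snocEquiv (fun _ => Fin (B + 1))).sum_comp, Fintype.sum_prod_type]
    have h1 : ∀ (r : Fin (B + 1)),
      (∑ a : Fin m → Fin (B + 1), (∏ i ∈ range (m + 1),
      if tex (m + 1) B (Fin.snoc a r) n i ≤ tex (m + 1) B (Fin.snoc a r) n (i + 1) then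
        K i (tex (m + 1) B (Fin.snoc a r) n (i + 1)) (tex (m + 1) B (Fin.snoc a r) n i) else 0)
      * f (tex (m + 1) B (Fin.snoc a r) n 0)) =
        (if (r : ℕ) ≤ n then K m n r else 0) * Fch K f m r := by
      intro r
      rw [← ih r (by omega), mul_sum]
      refine sum_congr rfl fun a _ => ?_
      rw [prod_range_succ, tex_snoc _ _ _ _ _ 0 (by omega), tex_snoc _ _ _ _ _ m le_rfl]
      have : ∏ i ∈ range m, (if tex (m + 1) B (Fin.snoc a r) n i ≤ tex (m + 1) B (Fin.snoc a r) n (i + 1) then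
        K i (tex (m + 1) B (Fin.snoc a r) n (i + 1)) (tex (m + 1) B (Fin.snoc a r) n i) else 0)
        = ∏ i ∈ range m, (if tex m B a r i ≤ tex m B a r (i + 1) then
        K i (tex m B a r (i + 1)) (tex m B a r i) else 0) := by
        refine prod_congr rfl fun i hi => ?_
        simp at hi
        rw [tex_snoc _ _ _ _ _ i (by omega), tex_snoc _ _ _ _ _ (i + 1) (by omega)]
      rw [this, show tex m B a r m = r by simp [tex],
        show tex (m + 1) B (Fin.snoc a r) n (m + 1) = n by simp [tex]]
      ring
    refine (sum_congr rfl fun r _ => h1 r).trans ?_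
    rw [Fin.sum_univ_eq_sum_range (fun r => (if r ≤ n then K m n r else 0) * Fch K f m r) (B + 1)]
    simp only [Fch, ite_mul, zero_mul]
    rw [← sum_filter]
    refine sum_congr ?_ fun _ _ => rfl
    ext r; simp; omega

lemma zpow_sum' {q : ℂ} (hq : q ≠ 0) (s : Finset ℕ) (E : ℕ → ℤ) :
    ∏ i ∈ s, q ^ (E i) = q ^ (∑ i ∈ s, E i) := by
  induction s using Finset.induction_on with
  | empty => simp
  | insert a s ha ih => rw [prod_insert ha, sum_insert ha, ih, zpow_add₀ hq]

lemma ch2z (n : ℕ) : 2 * ((n.choose 2 : ℕ) : ℤ) = (n : ℤ) * ((n : ℤ) - 1) := by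
  induction n with
  | zero => simp
  | succ n ih => rw [ch2]; push_cast; linarith

noncomputable def Wo (q : ℂ) (t i N r : ℕ) : ℂ :=
  if i < t then q ^ (-((r : ℤ) * (N : ℤ)) - (if i + 1 < t then (r : ℤ) else 0))
    else if i = t then (-1) ^ r * q ^ (r.choose 2) else q ^ (r ^ 2)

noncomputable def Ko (q : ℂ) (t i N r : ℕ) : ℂ := Wo q t i N r * ee q (N - r)

lemma bTerm_eq {q : ℂ} (hq : q ≠ 0) (t n : ℕ) (A : ℕ → ℕ) (hA : A (2 * t + 1) = n) :
    bTerm q t n A = (∏ i ∈ range (2 * t + 1), Ko q t i (A (i + 1)) (A i)) * ee q (A 0) := by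
  unfold Ko
  rw [prod_mul_distrib, prod_range_succ (fun i => ee q (A (i + 1) - A i)), hA,
    show 2 * t + 1 = t + 1 + t by ring, prod_range_add, prod_range_succ]
  have h1 : ∏ i ∈ range t, Wo q t i (A (i + 1)) (A i)
      = q ^ (- (∑ i ∈ range t, (A i : ℤ) * (A (i + 1) : ℤ)) - ∑ i ∈ range (t - 1), (A i : ℤ)) := by
    have : ∑ i ∈ range (t - 1), (A i : ℤ) = ∑ i ∈ range t, (if i + 1 < t then (A i : ℤ) else 0) := by
      cases t with
      | zero => simp
      | succ t =>
        rw [sum_range_succ]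
        simp
        refine sum_congr rfl fun i hi => ?_
        simp at hi
        simp [hi]
    rw [this, ← sum_neg_distrib, ← sum_sub_distrib, ← zpow_sum' hq]
    refine prod_congr rfl fun i hi => ?_
    simp at hi
    simp [Wo, hi]
  have h2 : ∏ i ∈ range t, Wo q t (t + 1 + i) (A (t + 1 + i + 1)) (A (t + 1 + i))
      = q ^ (∑ i ∈ range t, (A (t + 1 + i) : ℤ) ^ 2) := by
    rw [← zpow_sum' hq]
    refine prod_congr rfl fun i hi => ?_
    have a1 : ¬ (t + 1 + i < t) := by omega
    have a2 : ¬ (t + 1 + i = t) := by omega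
    simp only [Wo, a1, a2, if_false]
    exact_mod_cast rfl
  have h3 : Wo q t t (A (t + 1)) (A t) = (-1) ^ (A t) * q ^ ((A t : ℤ) * ((A t : ℤ) - 1) / 2) := by
    rw [← ch2z, Int.mul_ediv_cancel_left _ (by norm_num)]
    simp [Wo]
  rw [h1, h2, h3]
  unfold bTerm ee
  rw [prod_inv_distrib, sub_sub, sub_eq_add_neg, zpow_add₀ hq, zpow_add₀ hq, neg_add', div_eq_mul_inv,
    mul_inv, mul_inv]
  ring

lemma lhs_eq {q : ℂ} (hq : q ≠ 0) (t n : ℕ) :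
    ∑ a ∈ Finset.univ.filter
        (fun a : Fin (2 * t + 1) → Fin (n + 1) =>
          ∀ i : Fin (2 * t), a i.castSucc ≤ a i.succ),
      bTerm q t n (fun j => if h : j < 2 * t + 1 then (a ⟨j, h⟩ : ℕ) else 0) =
    Fch (Ko q t) (ee q) (2 * t + 1) n := by
  rw [← chain (Ko q t) (ee q) n (2 * t + 1) n le_rfl, sum_filter]
  refine sum_congr rfl fun a _ => ?_
  split_ifs with h
  · have h1 : bTerm q t n (fun j => if h : j < 2 * t + 1 then (a ⟨j, h⟩ : ℕ) else 0)
        = bTerm q t n (tex (2 * t + 1) n a n) := by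
      have hh : ∀ j < 2 * t + 1, (if h : j < 2 * t + 1 then (a ⟨j, h⟩ : ℕ) else 0)
          = tex (2 * t + 1) n a n j := by
        intro j hj; simp [tex, hj]
      unfold bTerm
      simp only []
      rw [hh t (by omega), hh (2 * t) (by omega), hh 0 (by omega)]
      congr 1
      · congr 2
        congr 1
        · congr 1
          · congr 1
            refine sum_congr rfl fun i hi => ?_
            simp at hi; rw [hh _ (by omega)]
          · refine sum_congr rfl fun i hi => ?_
            simp at hi; rw [hh _ (by omega), hh _ (by omega)]
        · refine sum_congr rfl fun i hi => ?_
          simp at hi; rw [hh _ (by omega)]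
      · congr 2
        refine prod_congr rfl fun i hi => ?_
        simp at hi; rw [hh _ (by omega), hh _ (by omega)]
    rw [h1, bTerm_eq hq t n _ (by simp [tex])]
    congr 1
    refine prod_congr rfl fun i hi => ?_
    rw [if_pos]
    simp at hi
    unfold tex
    rw [dif_pos (by omega)]
    split_ifs with h2
    · exact h ⟨i, by omega⟩
    · omega
  · push Not at h
    obtain ⟨i, hi⟩ := h
    symm
    apply mul_eq_zero_of_left
    apply prod_eq_zero (i := (i : ℕ)) (mem_range.2 (by omega))
    rw [if_neg]
    unfold tex
    rw [dif_pos (by omega), dif_pos (by omega)]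
    push Not
    exact hi

lemma ee_inv {q : ℂ} (hq : q ≠ 0) (hx : ∀ n : ℕ, 1 - q ^ (n + 1) ≠ 0)
    (hp : ∀ n : ℕ, 1 - q⁻¹ ^ (n + 1) ≠ 0) (n : ℕ) :
    ee q n = (-1) ^ n * q⁻¹ ^ ((n + 1).choose 2) * ee q⁻¹ n := by
  induction n with
  | zero => simp [ee_zero]
  | succ n ih =>
    apply mul_left_cancel₀ (hx n)
    rw [← ee_succ hx, ih, ee_succ hp, ch2 (n + 1), pow_add _ _ (n + 1)]
    have : q⁻¹ ^ (n + 1) * q ^ (n + 1) = 1 := by rw [← mul_pow]; simp [hq]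
    linear_combination (-(-1) ^ n * q⁻¹ ^ ((n + 1).choose 2) * ee q⁻¹ (n+1)) * this

lemma F_low {q : ℂ} (hq : q ≠ 0) (hx : ∀ n : ℕ, 1 - q ^ (n + 1) ≠ 0)
    (hp : ∀ n : ℕ, 1 - q⁻¹ ^ (n + 1) ≠ 0) (t i : ℕ) (hi : i < t) : ∀ n : ℕ,
    Fch (Ko q t) (ee q) i n = (-1) ^ n * q⁻¹ ^ ((n + 1).choose 2) * bb q⁻¹ (i + 1) n := by
  induction i with
  | zero => intro n; rw [Fch, zero_add, bb_one hp, ee_inv hq hx hp]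
  | succ i ih =>
    intro n
    rw [Fch, bb_succ hp, mul_sum]
    refine sum_congr rfl fun r hr => ?_
    have hr' : r ≤ n := by simp at hr; omega
    obtain ⟨d, rfl⟩ : ∃ d, n = r + d := ⟨n - r, by omega⟩
    have a1 : i < t := by omega
    rw [ih a1, Ko, Wo, if_pos a1, if_pos hi, ee_inv hq hx hp, show r + d - r = d by omega]
    have e1 : q ^ (-((r : ℤ) * ((r + d : ℕ) : ℤ)) - (r : ℤ)) = q⁻¹ ^ (r * (r + d) + r) := by
      rw [← zpow_natCast, inv_zpow']; congr 1; push_cast; ring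
    have e2 : r * (r + d) + r + (d + 1).choose 2 + (r + 1).choose 2
        = (r + d + 1).choose 2 + (r ^ 2 + r) := by
      have b1 := ch2z (d + 1)
      have b2 := ch2z (r + 1)
      have b3 := ch2z (r + d + 1)
      zify; push_cast at *; linarith
    have e3 : q⁻¹ ^ (r * (r + d) + r) * q⁻¹ ^ ((d + 1).choose 2) * q⁻¹ ^ ((r + 1).choose 2)
        = q⁻¹ ^ ((r + d + 1).choose 2) * q⁻¹ ^ (r ^ 2 + r) := by
      simp only [← pow_add]; rw [e2]
    rw [e1]
    have := e3
    linear_combination ((-1) ^ (r + d) * ee q⁻¹ d * bb q⁻¹ (i + 1) r) * e3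

lemma F_mid {q : ℂ} (hq : q ≠ 0) (hx : ∀ n : ℕ, 1 - q ^ (n + 1) ≠ 0)
    (hp : ∀ n : ℕ, 1 - q⁻¹ ^ (n + 1) ≠ 0) (t n : ℕ) :
    Fch (Ko q t) (ee q) (t + 1) n = q⁻¹ ^ (n ^ 2 + n) * bb q⁻¹ t n := by
  cases t with
  | zero =>
    rw [bb_zero hp]
    have := delta hx n
    simp only [Fch, Ko, Wo]
    simp
    rw [this]
    split_ifs with h <;> simp [h]
  | succ t =>
    rw [Fch]
    simp_rw [Fch, mul_sum]
    rw [Finset.sum_comm' (t' := range (n + 1)) (s' := fun j => Ico j (n + 1))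
      (by intro a b; simp; omega)]
    have key : ∀ r ∈ range (n + 1), ∑ N ∈ Ico r (n + 1), Ko q (t + 1) (t + 1) n N *
        (Ko q (t + 1) t N r * Fch (Ko q (t + 1)) (ee q) t r)
        = if r = n then q⁻¹ ^ (n ^ 2 + n) * bb q⁻¹ (t + 1) n else 0 := by
      intro r hr
      have hr' : r ≤ n := by simp at hr; omega
      have hd := delta hx (n - r)
      rw [sum_Ico_eq_sum_range]
      have : ∑ k ∈ range (n + 1 - r), Ko q (t + 1) (t + 1) n (r + k) *
          (Ko q (t + 1) t (r + k) r * Fch (Ko q (t + 1)) (ee q) t r)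
          = (-1) ^ r * q⁻¹ ^ ((r + 1).choose 2) * Fch (Ko q (t + 1)) (ee q) t r *
            (if n - r = 0 then 1 else 0) := by
        rw [← hd, mul_sum, show n + 1 - r = n - r + 1 by omega]
        refine sum_congr rfl fun k hk => ?_
        simp only [Ko, Wo]
        simp only [lt_irrefl, if_false, if_true, Nat.lt_succ_self, sub_zero]
        rw [show n - (r + k) = n - r - k by omega, show r + k - r = k by omega]
        have e1 : q ^ ((r + k).choose 2) * q ^ (-((r : ℤ) * ((r + k : ℕ) : ℤ)))
            = q⁻¹ ^ ((r + 1).choose 2) * q ^ (k.choose 2) := by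
          rw [← zpow_natCast, ← zpow_natCast, ← zpow_natCast q, inv_zpow', ← zpow_add₀ hq,
            ← zpow_add₀ hq]
          congr 1
          have b1 := ch2z (r + 1)
          have b2 := ch2z k
          have b3 := ch2z (r + k)
          push_cast at *; linarith
        linear_combination ((-1) ^ (r + k) * ee q (n - r - k) * ee q k *
          Fch (Ko q (t + 1)) (ee q) t r) * e1
      rw [this]
      by_cases h : r = n
      · subst h
        rw [F_low hq hx hp _ _ (by omega)]
        have e1 : (-1 : ℂ) ^ r * (-1) ^ r = 1 := by rw [← mul_pow]; simp
        have e2 : q⁻¹ ^ ((r + 1).choose 2) * q⁻¹ ^ ((r + 1).choose 2) = q⁻¹ ^ (r ^ 2 + r) := by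
          rw [← pow_add]; congr 1
          have b1 := ch2z (r + 1)
          zify; push_cast at *; linarith
        simp only [Nat.sub_self, if_true]
        rw [← e2]
        linear_combination (q⁻¹ ^ ((r + 1).choose 2) * q⁻¹ ^ ((r + 1).choose 2) *
          bb q⁻¹ (t + 1) r) * e1
      · rw [if_neg h, if_neg (by omega), mul_zero]
    rw [sum_congr rfl key]
    simp

lemma alpha_conv {q : ℂ} (hq : q ≠ 0) (hx : ∀ n : ℕ, 1 - q ^ (n + 1) ≠ 0)
    (hp : ∀ n : ℕ, 1 - q⁻¹ ^ (n + 1) ≠ 0) (t n : ℕ) :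
    q⁻¹ ^ (n ^ 2 + n) * bb q⁻¹ t n
      = ∑ j ∈ range (n + 1), (q⁻¹ ^ (t * j ^ 2) * alphaPP q t j) * ee q (n - j) * ee q (n + j) := by
  have h1 : bb q⁻¹ t n = ∑ j ∈ range (n + 1),
      ((-1) ^ j * q⁻¹ ^ (t * (j ^ 2 + j) + j.choose 2)) * ee q⁻¹ (n - j) * ee q⁻¹ (n + j)
      - ∑ j ∈ range (n + 1), ((-1) ^ j * q⁻¹ ^ (t * (j ^ 2 + j) + j.choose 2 + (2 * j + 1))) *
        ((1 - q⁻¹ ^ (n - j)) * ee q⁻¹ (n - j)) * ee q⁻¹ (n + j + 1) := by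
    unfold bb
    rw [← sum_sub_distrib]
    refine sum_congr rfl fun j hj => ?_
    have hj' : j ≤ n := by simp at hj; omega
    obtain ⟨d, rfl⟩ : ∃ d, n = j + d := ⟨n - j, by omega⟩
    rw [ee_succ hp (j + d + j), show j + d - j = d by omega]
    ring
  rw [h1, sum_range_succ' _ n, sum_range_succ _ n, sum_range_succ' _ n]
  have e0 : ∀ j ≤ n, ee q (n - j) * ee q (n + j) =
      q⁻¹ ^ (n ^ 2 + n) * q⁻¹ ^ (j ^ 2) * (ee q⁻¹ (n - j) * ee q⁻¹ (n + j)) := by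
    intro j hj
    obtain ⟨d, rfl⟩ : ∃ d, n = j + d := ⟨n - j, by omega⟩
    rw [ee_inv hq hx hp, ee_inv hq hx hp (j + d + j), show j + d - j = d by omega]
    have s1 : (-1 : ℂ) ^ d * (-1) ^ (j + d + j) = 1 := by
      rw [← pow_add]; exact Even.neg_one_pow ⟨d + j, by ring⟩
    have s2 : q⁻¹ ^ ((d + 1).choose 2) * q⁻¹ ^ ((j + d + j + 1).choose 2)
        = q⁻¹ ^ ((j + d) ^ 2 + (j + d)) * q⁻¹ ^ (j ^ 2) := by
      rw [← pow_add, ← pow_add]; congr 1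
      have b1 := ch2z (d + 1)
      have b2 := ch2z (j + d + j + 1)
      zify; push_cast at *; linarith
    rw [← s2]
    linear_combination (q⁻¹ ^ ((d + 1).choose 2) * q⁻¹ ^ ((j + d + j + 1).choose 2) *
      ee q⁻¹ d * ee q⁻¹ (j + d + j)) * s1
  have hz := e0 0 (by omega)
  have hs : ∑ j ∈ range n, (q⁻¹ ^ (t * (j + 1) ^ 2) * alphaPP q t (j + 1)) * ee q (n - (j + 1)) *
        ee q (n + (j + 1))
      = q⁻¹ ^ (n ^ 2 + n) * (∑ j ∈ range n,
      ((-1) ^ (j + 1) * q⁻¹ ^ (t * ((j + 1) ^ 2 + (j + 1)) + (j + 1).choose 2)) *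
        ee q⁻¹ (n - (j + 1)) * ee q⁻¹ (n + (j + 1))
      - ∑ j ∈ range n, ((-1) ^ j * q⁻¹ ^ (t * (j ^ 2 + j) + j.choose 2 + (2 * j + 1))) *
        ((1 - q⁻¹ ^ (n - j)) * ee q⁻¹ (n - j)) * ee q⁻¹ (n + j + 1)) := by
    rw [← sum_sub_distrib, mul_sum]
    refine sum_congr rfl fun j hj => ?_
    have hj' : j < n := by simpa using hj
    obtain ⟨d, rfl⟩ : ∃ d, n = j + 1 + d := ⟨n - j - 1, by omega⟩
    rw [mul_assoc, e0 _ (by omega), show j + 1 + d - (j + 1) = d by omega,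
      show j + 1 + d - j = d + 1 by omega, ← ee_succ hp, alphaPP, if_neg (by omega)]
    have c1 := ch2z (j + 1)
    have c2 := ch2z j
    have f1 : q⁻¹ ^ (t * (j + 1) ^ 2) * q ^ (((j + 1 : ℕ) : ℤ) * (((j + 1 : ℕ) : ℤ) + 2 * (t : ℤ) - 1) / 2)
        * q⁻¹ ^ ((j + 1) ^ 2) = q⁻¹ ^ (t * (j ^ 2 + j) + j.choose 2 + (2 * j + 1)) := by
      rw [show ((j + 1 : ℕ) : ℤ) * (((j + 1 : ℕ) : ℤ) + 2 * (t : ℤ) - 1)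
        = 2 * (((j + 1).choose 2 : ℕ) + (j + 1) * t) by push_cast at *; linarith,
        Int.mul_ediv_cancel_left _ (by norm_num)]
      simp only [← zpow_natCast, inv_zpow']
      simp only [← zpow_add₀ hq]
      congr 1
      push_cast at *; linarith
    have f2 : q⁻¹ ^ (t * (j + 1) ^ 2) * q ^ (((j + 1 : ℕ) : ℤ) * (((j + 1 : ℕ) : ℤ) - 2 * (t : ℤ) + 1) / 2)
        * q⁻¹ ^ ((j + 1) ^ 2) = q⁻¹ ^ (t * ((j + 1) ^ 2 + (j + 1)) + (j + 1).choose 2) := by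
      rw [show ((j + 1 : ℕ) : ℤ) * (((j + 1 : ℕ) : ℤ) - 2 * (t : ℤ) + 1)
        = 2 * (((j + 1).choose 2 : ℕ) + (j + 1) - (j + 1) * t) by push_cast at *; linarith,
        Int.mul_ediv_cancel_left _ (by norm_num)]
      simp only [← zpow_natCast, inv_zpow']
      simp only [← zpow_add₀ hq]
      congr 1
      push_cast at *; linarith
    rw [← f1, ← f2, show j + 1 + d + j + 1 = j + 1 + d + (j + 1) by ring]
    ring
  rw [hs]
  simp [alphaPP] at hz ⊢
  rw [hz]
  ring

lemma F_high {q : ℂ} (hq : q ≠ 0) (hx : ∀ n : ℕ, 1 - q ^ (n + 1) ≠ 0)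
    (hp : ∀ n : ℕ, 1 - q⁻¹ ^ (n + 1) ≠ 0) (t s : ℕ) : ∀ n : ℕ,
    Fch (Ko q t) (ee q) (t + 1 + s) n = ∑ j ∈ range (n + 1),
      (q ^ (s * j ^ 2) * (q⁻¹ ^ (t * j ^ 2) * alphaPP q t j)) * ee q (n - j) * ee q (n + j) := by
  induction s with
  | zero => intro n; rw [add_zero, F_mid hq hx hp, alpha_conv hq hx hp]; simp
  | succ s ih =>
    intro n
    rw [← add_assoc, Fch]
    have := bailey hx 0 (fun j => q ^ (s * j ^ 2) * (q⁻¹ ^ (t * j ^ 2) * alphaPP q t j)) n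
    simp only [zero_mul, add_zero] at this
    have a1 : ¬ (t + 1 + s < t) := by omega
    have a2 : ¬ (t + 1 + s = t) := by omega
    simp only [ih, Ko, Wo, a1, a2, if_false]
    rw [this]
    refine sum_congr rfl fun j _ => ?_
    ring

/-- `(α''_j, β''_n)` is a Bailey pair relative to `1`:
the multisum `β''_n` equals `Σ_{j=0}^{n} α''_j/((q;q)_{n-j}(q;q)_{n+j})`.
The paper's `t` is `t+1` here. -/
theorem stmt18 (t n : ℕ) (q : ℂ)
    (hq0 : 0 < ‖q‖) (hq1 : ‖q‖ < 1) :
    ∑ a ∈ Finset.univ.filter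
        (fun a : Fin (2 * t + 1) → Fin (n + 1) =>
          ∀ i : Fin (2 * t), a i.castSucc ≤ a i.succ),
      bTerm q t n (fun j => if h : j < 2 * t + 1 then (a ⟨j, h⟩ : ℕ) else 0) =
    ∑ j ∈ Finset.range (n + 1),
      alphaPP q t j / (qPoch q q (n - j) * qPoch q q (n + j)) := by
  have hq : q ≠ 0 := norm_pos_iff.mp hq0
  have hne : ∀ n : ℕ, q ^ (n + 1) ≠ 1 := by
    intro n h
    have h2 : ‖q‖ ^ (n + 1) < 1 := pow_lt_one₀ hq0.le hq1 (by omega)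
    rw [← norm_pow, h] at h2
    simp at h2
  have hx : ∀ n : ℕ, 1 - q ^ (n + 1) ≠ 0 := fun n h => hne n (sub_eq_zero.mp h).symm
  have hp : ∀ n : ℕ, 1 - q⁻¹ ^ (n + 1) ≠ 0 := by
    intro n h
    apply hne n
    have h3 := (sub_eq_zero.mp h).symm
    rwa [inv_pow, inv_eq_one] at h3
  rw [lhs_eq hq, show 2 * t + 1 = t + 1 + t by ring, F_high hq hx hp]
  refine Finset.sum_congr rfl fun j _ => ?_
  have h4 : q ^ (t * j ^ 2) * q⁻¹ ^ (t * j ^ 2) = 1 := by rw [← mul_pow]; simp [hq]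
  rw [← mul_assoc, h4, one_mul, ee, ee, div_eq_mul_inv, mul_inv, mul_assoc]
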